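/- Let f be a multicritical circle map with irrational rotation number and return times q_n. There exists a constant C_2 > 1 depending only on f satisfying the following. Let z_1, z_2, z_3, z_4, z_5 be the points (with z_{j+1} = f^{q_n}(z_j) and comparable consecutive gaps) produced by the seven-point lemma. If w_0, w_1, w_2, w_3, w_4 are points on the circle with w_{j+1} = f^{q_n}(w_j) and such that w_1 lies in the interval with endpoints z_1 and z_2 that does not contain z_3, then |w_1 − w_2|/|w_0 − w_1| ≤ C_2, and C_2^{−1} ≤ |w_{i−1} − w_i|/|w_i − w_{i+1}| ≤ C_2 for i = 2, 3. -/

import Mathlib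

open Set Filter MeasureTheory

noncomputable section

/-- The Schwarzian derivative `Sf = (f''/f')' - (1/2) (f''/f')^2`. -/
def schwarzianDeriv (f : ℝ → ℝ) (x : ℝ) : ℝ :=
  deriv (fun y => deriv (deriv f) y / deriv f y) x
    - (1 / 2) * (deriv (deriv f) x / deriv f x) ^ 2

/-- A multicritical circle map, described through its lift `F : ℝ → ℝ` to the real line.
It is an orientation-preserving `C^3` circle homeomorphism with finitely many critical
points `c 0, …, c (N-1)`, each of non-flat power-law type: near `c i` the derivative is
pinched between two multiples of `|x - c i| ^ (s i - 1)` with `s i > 1`, the Schwarzian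
derivative is negative on a punctured neighborhood of each critical point, and
`log (F')` has bounded variation (bounded by `v`) off the critical neighborhoods. -/
structure MCM where
  /-- the lift of the circle map -/
  F : ℝ → ℝ
  smooth : ContDiff ℝ 3 F
  mono : StrictMono F
  deg1 : ∀ x, F (x + 1) = F x + 1
  /-- number of critical points -/
  N : ℕ
  N_pos : 0 < N
  /-- the critical points (one representative in `[0,1)` for each) -/
  c : Fin N → ℝ
  c_mem : ∀ i, c i ∈ Set.Ico (0 : ℝ) 1
  c_inj : Function.Injective c
  isCrit : ∀ i, deriv F (c i) = 0
  critOnly : ∀ x, deriv F x = 0 → ∃ (i : Fin N) (k : ℤ), x = c i + (k : ℝ)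
  /-- neighborhoods of the critical points -/
  W : Fin N → Set ℝ
  W_open : ∀ i, IsOpen (W i)
  c_mem_W : ∀ i, c i ∈ W i
  /-- the criticalities (power-law exponents) -/
  s : Fin N → ℝ
  s_gt_one : ∀ i, 1 < s i
  al : Fin N → ℝ
  be : Fin N → ℝ
  al_pos : ∀ i, 0 < al i
  al_lt_be : ∀ i, al i < be i
  powerLaw : ∀ i, ∀ x ∈ W i, x ≠ c i →
    al i * |x - c i| ^ (s i - 1) < deriv F x ∧
      deriv F x < be i * |x - c i| ^ (s i - 1)
  negSchwarzian : ∀ i, ∀ x ∈ W i, x ≠ c i → schwarzianDeriv F x < 0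
  /-- bound for the variation of `log DF` off the critical neighborhoods -/
  v : ℝ
  v_pos : 0 < v
  logDF_var : eVariationOn (fun x => Real.log (deriv F x))
      (Set.Icc 0 1 \ ⋃ (i) (k : ℤ), (fun y => y + (k : ℝ)) '' W i) ≤ ENNReal.ofReal v

/-- The circle map with lift `F` has rotation number `ρ`. -/
def HasRotationNumber (F : ℝ → ℝ) (ρ : ℝ) : Prop :=
  Tendsto (fun n : ℕ => F^[n] 0 / n) atTop (nhds ρ)

/-- The Gauss map `x ↦ {1/x}`. -/
def gaussMap (x : ℝ) : ℝ := Int.fract x⁻¹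

/-- Partial quotients `a_n` of the continued fraction expansion of `ρ ∈ (0,1)`. -/
def cfDigit (ρ : ℝ) (n : ℕ) : ℕ := (⌊(gaussMap^[n] ρ)⁻¹⌋).toNat

/-- Return times: the denominators `q_n` of the convergents of `ρ`,
`q_0 = 1`, `q_1 = a_0`, `q_{n+1} = a_n q_n + q_{n-1}`. -/
def qDen (ρ : ℝ) : ℕ → ℕ
  | 0 => 1
  | 1 => cfDigit ρ 0
  | n + 2 => cfDigit ρ (n + 1) * qDen ρ (n + 1) + qDen ρ n

/-- Numerators `p_n` of the convergents of `ρ`: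
`p_0 = 0`, `p_1 = 1`, `p_{n+1} = a_n p_n + p_{n-1}`. -/
def pNum (ρ : ℝ) : ℕ → ℕ
  | 0 => 0
  | 1 => 1
  | n + 2 => cfDigit ρ (n + 1) * pNum ρ (n + 1) + pNum ρ n

lemma spt_gauss_irr {ρ : ℝ} (hirr : Irrational ρ) (hmem : ρ ∈ Set.Ioo (0 : ℝ) 1) (n : ℕ) :
    Irrational (gaussMap^[n] ρ) ∧ gaussMap^[n] ρ ∈ Set.Ioo (0 : ℝ) 1 := by
  induction n with
  | zero => exact ⟨hirr, hmem⟩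
  | succ n ih =>
    rw [Function.iterate_succ_apply']
    obtain ⟨h1, h2, h3⟩ := ih
    have h4 : Irrational (gaussMap (gaussMap^[n] ρ)) := by
      unfold gaussMap
      rw [← Int.self_sub_floor]
      exact h1.inv.sub_intCast _
    refine ⟨h4, ?_, Int.fract_lt_one _⟩
    have : 0 ≤ gaussMap (gaussMap^[n] ρ) := Int.fract_nonneg _
    exact lt_of_le_of_ne this (Ne.symm h4.ne_zero)

lemma spt_digit {ρ : ℝ} (hirr : Irrational ρ) (hmem : ρ ∈ Set.Ioo (0 : ℝ) 1) (n : ℕ) :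
    (cfDigit ρ n : ℝ) = (gaussMap^[n] ρ)⁻¹ - gaussMap^[n+1] ρ ∧ 0 < cfDigit ρ n := by
  obtain ⟨h1, h2, h3⟩ := spt_gauss_irr hirr hmem n
  have h4 : (1:ℤ) ≤ ⌊(gaussMap^[n] ρ)⁻¹⌋ := by
    rw [Int.le_floor]
    push_cast
    exact (one_le_inv₀ h2).2 h3.le
  constructor
  · rw [Function.iterate_succ_apply']
    conv_rhs => rw [gaussMap, ← Int.self_sub_floor]
    have : ((cfDigit ρ n : ℤ) : ℝ) = (⌊(gaussMap^[n] ρ)⁻¹⌋ : ℝ) := by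
      unfold cfDigit
      rw [Int.toNat_of_nonneg (by omega)]
    rw [Int.cast_natCast] at this
    rw [this]; ring
  · unfold cfDigit; omega

lemma spt_q_pos {ρ : ℝ} (hirr : Irrational ρ) (hmem : ρ ∈ Set.Ioo (0 : ℝ) 1) (n : ℕ) :
    0 < qDen ρ n ∧ 0 < qDen ρ (n+1) := by
  induction n with
  | zero => exact ⟨by simp [qDen], by simpa [qDen] using (spt_digit hirr hmem 0).2⟩
  | succ n ih =>
    refine ⟨ih.2, ?_⟩
    rw [qDen]
    exact Nat.add_pos_right _ ih.1

def sptE (ρ : ℝ) (n : ℕ) : ℝ := qDen ρ n * ρ - pNum ρ n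

lemma spt_e_succ {ρ : ℝ} (hirr : Irrational ρ) (hmem : ρ ∈ Set.Ioo (0 : ℝ) 1) (n : ℕ) :
    sptE ρ (n+1) = - gaussMap^[n+1] ρ * sptE ρ n := by
  induction n with
  | zero =>
    have h := (spt_digit hirr hmem 0).1
    have h0 : ρ ≠ 0 := hirr.ne_zero
    simp only [sptE, qDen, pNum, Function.iterate_zero, id] at h ⊢
    rw [h]; push_cast; field_simp; ring
  | succ n ih =>
    have h := (spt_digit hirr hmem (n+1)).1
    have h0 := (spt_gauss_irr hirr hmem (n+1)).1.ne_zero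
    have h1 : sptE ρ (n+2) = cfDigit ρ (n+1) * sptE ρ (n+1) + sptE ρ n := by
      simp only [sptE, qDen, pNum]; push_cast; ring
    have h2 : sptE ρ n = - sptE ρ (n+1) / gaussMap^[n+1] ρ := by
      rw [ih]; field_simp
    rw [show n + 1 + 1 = n + 2 from rfl] at *
    rw [h1, h, h2]; field_simp; ring

lemma spt_e_ne {ρ : ℝ} (hirr : Irrational ρ) (hmem : ρ ∈ Set.Ioo (0 : ℝ) 1) (n : ℕ) :
    sptE ρ n ≠ 0 := by
  induction n with
  | zero => simpa [sptE, qDen, pNum] using hirr.ne_zero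
  | succ n ih =>
    rw [spt_e_succ hirr hmem]
    exact mul_ne_zero (neg_ne_zero.2 (spt_gauss_irr hirr hmem (n+1)).1.ne_zero) ih

lemma spt_e_lt {ρ : ℝ} (hirr : Irrational ρ) (hmem : ρ ∈ Set.Ioo (0 : ℝ) 1) (n : ℕ) :
    |sptE ρ (n+1)| < |sptE ρ n| := by
  rw [spt_e_succ hirr hmem, abs_mul, abs_neg]
  obtain ⟨h1, h2, h3⟩ := spt_gauss_irr hirr hmem (n+1)
  rw [abs_of_pos h2]
  have := abs_pos.2 (spt_e_ne hirr hmem n)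
  nlinarith

lemma spt_e_lt_one {ρ : ℝ} (hirr : Irrational ρ) (hmem : ρ ∈ Set.Ioo (0 : ℝ) 1) (n : ℕ) :
    |sptE ρ n| < 1 := by
  induction n with
  | zero => simpa [sptE, qDen, pNum, abs_of_pos hmem.1] using hmem.2
  | succ n ih => exact (spt_e_lt hirr hmem n).trans ih

lemma spt_det (ρ : ℝ) (n : ℕ) :
    ((qDen ρ n : ℤ) * pNum ρ (n+1) - qDen ρ (n+1) * pNum ρ n) ^ 2 = 1 := by
  induction n with
  | zero => simp [qDen, pNum]
  | succ n ih =>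
    rw [← ih]; simp only [qDen, pNum]; push_cast; ring

/-- best approximation -/
lemma spt_best {ρ : ℝ} (hirr : Irrational ρ) (hmem : ρ ∈ Set.Ioo (0 : ℝ) 1) (n : ℕ)
    (l k : ℤ) (hl : 0 < l) (hl2 : l < qDen ρ n) : |sptE ρ n| < |l * ρ - k| := by
  cases n with
  | zero => simp [qDen] at hl2; omega
  | succ n =>
    refine (spt_e_lt hirr hmem n).trans_le ?_
    set D : ℤ := (qDen ρ n : ℤ) * pNum ρ (n+1) - qDen ρ (n+1) * pNum ρ n with hD
    have hD1 : D * D = 1 := by rw [← sq]; exact spt_det ρ n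
    obtain ⟨hq0, hq1⟩ := spt_q_pos hirr hmem n
    obtain ⟨b, hb⟩ : ∃ b : ℤ, b = D * (l * pNum ρ (n+1) - k * qDen ρ (n+1)) := ⟨_, rfl⟩
    obtain ⟨a, ha⟩ : ∃ a : ℤ, a = D * (k * qDen ρ n - l * pNum ρ n) := ⟨_, rfl⟩
    have e1 : l = a * qDen ρ (n+1) + b * qDen ρ n := by
      have : a * qDen ρ (n+1) + b * qDen ρ n = D * D * l := by rw [ha, hb, hD]; ring
      rw [this, hD1]; ring
    have e2 : k = a * pNum ρ (n+1) + b * pNum ρ n := by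
      have : a * pNum ρ (n+1) + b * pNum ρ n = D * D * k := by rw [ha, hb, hD]; ring
      rw [this, hD1]; ring
    have e3 : (l:ℝ) * ρ - k = a * sptE ρ (n+1) + b * sptE ρ n := by
      rw [e1, e2]; simp only [sptE]; push_cast; ring
    have hx := (spt_gauss_irr hirr hmem (n+1)).2.1
    have e4 : (l:ℝ) * ρ - k = (b - a * gaussMap^[n+1] ρ) * sptE ρ n := by
      rw [e3, spt_e_succ hirr hmem]; ring
    rw [e4, abs_mul]
    have hq0' : (0:ℤ) < qDen ρ n := by exact_mod_cast hq0
    have hq1' : (0:ℤ) < qDen ρ (n+1) := by exact_mod_cast hq1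
    have key : (1:ℝ) ≤ |(b - a * gaussMap^[n+1] ρ)| := by
      rcases le_or_gt a 0 with h | h
      · have hb1 : 1 ≤ b := by
          by_contra hb
          nlinarith
        have : (1:ℝ) ≤ b := by exact_mod_cast hb1
        have h' : (a:ℝ) ≤ 0 := by exact_mod_cast h
        refine le_trans ?_ (le_abs_self _)
        nlinarith
      · have hb1 : b ≤ -1 := by
          by_contra hb
          nlinarith
        have : (b:ℝ) ≤ -1 := by exact_mod_cast hb1
        have h' : (0:ℝ) < a := by exact_mod_cast h
        refine le_trans ?_ (neg_le_abs _)
        nlinarith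
    nlinarith [abs_nonneg (sptE ρ n)]

def sptLift (f : MCM) : CircleDeg1Lift := ⟨⟨f.F, f.mono.monotone⟩, f.deg1⟩

lemma spt_lift_coe (f : MCM) (n : ℕ) (x : ℝ) : (sptLift f ^ n) x = f.F^[n] x := by
  rw [CircleDeg1Lift.coe_pow]; rfl

lemma spt_trans (f : MCM) (ρ : ℝ) (hrot : HasRotationNumber f.F ρ) :
    (sptLift f).translationNumber = ρ := by
  have h := (sptLift f).tendsto_translation_number₀
  refine tendsto_nhds_unique h ?_
  simpa [spt_lift_coe, HasRotationNumber] using hrot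

lemma spt_iter_int (f : MCM) (n : ℕ) (x : ℝ) (k : ℤ) : f.F^[n] (x + k) = f.F^[n] x + k := by
  rw [← spt_lift_coe, ← spt_lift_coe]
  exact CircleDeg1Lift.map_add_int _ _ _

lemma spt_F_int (f : MCM) (x : ℝ) (k : ℤ) : f.F (x + k) = f.F x + k := spt_iter_int f 1 x k

lemma spt_order (f : MCM) (ρ : ℝ) (hrot : HasRotationNumber f.F ρ) (a b : ℕ) (k l : ℤ) (x : ℝ)
    (h : f.F^[a] x + k ≤ f.F^[b] x + l) : a * ρ + k ≤ b * ρ + l := by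
  rcases le_total a b with hab | hab
  · obtain ⟨m, rfl⟩ := Nat.exists_eq_add_of_le' hab
    rw [Function.iterate_add_apply, ← spt_lift_coe f m] at h
    have := CircleDeg1Lift.le_translationNumber_of_add_int_le (sptLift f ^ m)
      (x := f.F^[a] x) (m := k - l) (by push_cast; linarith)
    rw [CircleDeg1Lift.translationNumber_pow, spt_trans f ρ hrot] at this
    push_cast at this ⊢
    linarith
  · obtain ⟨m, rfl⟩ := Nat.exists_eq_add_of_le' hab
    rw [Function.iterate_add_apply, ← spt_lift_coe f m] at h
    have := CircleDeg1Lift.translationNumber_le_of_le_add_int (sptLift f ^ m)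
      (x := f.F^[b] x) (m := l - k) (by push_cast; linarith)
    rw [CircleDeg1Lift.translationNumber_pow, spt_trans f ρ hrot] at this
    push_cast at this ⊢
    linarith

/-- `x < y` are adjacent for the return map `F^q - p`. -/
def sptAdj (f : MCM) (q p : ℕ) (x y : ℝ) : Prop :=
  x < y ∧ (y = f.F^[q] x - p ∨ x = f.F^[q] y - p)

lemma spt_disj_aux (f : MCM) (ρ : ℝ) (hrot : HasRotationNumber f.F ρ) (q p : ℕ) (x y : ℝ)
    (h : sptAdj f q p x y) (i j : ℕ) (k : ℤ)
    (h1 : f.F^[i] x ≤ f.F^[j] y + k) (h2 : f.F^[j] x + k ≤ f.F^[i] y) :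
    |((i:ℝ) - j) * ρ - k| ≤ |q * ρ - p| := by
  rcases h.2 with h3 | h3
  · have h4 : ∀ m : ℕ, f.F^[m] y = f.F^[m+q] x + ((-p : ℤ) : ℝ) := by
      intro m
      rw [Function.iterate_add_apply, ← spt_iter_int, h3]; push_cast; rfl
    rw [h4] at h1 h2
    have g1 := spt_order f ρ hrot i (j+q) 0 (-p + k) x (by push_cast at *; linarith)
    have g2 := spt_order f ρ hrot j (i+q) k (-p) x (by push_cast at *; linarith)
    push_cast at g1 g2
    refine le_trans ?_ (le_abs_self _)
    rw [abs_le]; constructor <;> linarith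
  · have h4 : ∀ m : ℕ, f.F^[m] x = f.F^[m+q] y + ((-p : ℤ) : ℝ) := by
      intro m
      rw [Function.iterate_add_apply, ← spt_iter_int, h3]; push_cast; rfl
    rw [h4] at h1 h2
    have g1 := spt_order f ρ hrot (i+q) j (-p) k y (by push_cast at *; linarith)
    have g2 := spt_order f ρ hrot (j+q) i (-p + k) 0 y (by push_cast at *; linarith)
    push_cast at g1 g2
    refine le_trans ?_ (neg_le_abs _)
    rw [abs_le]; constructor <;> linarith

lemma spt_disj (f : MCM) (ρ : ℝ) (hirr : Irrational ρ) (hmem : ρ ∈ Set.Ioo (0 : ℝ) 1)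
    (hrot : HasRotationNumber f.F ρ) (n : ℕ) (x y : ℝ)
    (h : sptAdj f (qDen ρ n) (pNum ρ n) x y) (i j : ℕ) (hi : i < qDen ρ n) (hj : j < qDen ρ n)
    (k : ℤ)
    (h1 : f.F^[i] x ≤ f.F^[j] y + k) (h2 : f.F^[j] x + k ≤ f.F^[i] y) :
    i = j ∧ k = 0 := by
  have h3 := spt_disj_aux f ρ hrot _ _ x y h i j k h1 h2
  change _ ≤ |sptE ρ n| at h3
  have hij : i = j := by
    by_contra hne
    rcases lt_or_gt_of_ne hne with hlt | hlt
    · have := spt_best hirr hmem n ((j:ℤ) - i) (-k) (by omega) (by omega)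
      push_cast at this
      rw [← abs_neg (((j:ℝ) - i) * ρ - -k), show -(((j:ℝ) - i) * ρ - -k) = ((i:ℝ) - j) * ρ - k by ring] at this
      linarith
    · have := spt_best hirr hmem n ((i:ℤ) - j) k (by omega) (by omega)
      push_cast at this
      linarith
  refine ⟨hij, ?_⟩
  subst hij
  by_contra hk
  have h4 := spt_e_lt_one hirr hmem n
  have h5 : (1:ℝ) ≤ |(k:ℝ)| := by exact_mod_cast Int.one_le_abs hk
  simp at h3
  linarith

lemma spt_iter_mono (f : MCM) (n : ℕ) : StrictMono (f.F^[n]) := f.mono.iterate n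

lemma spt_len_one (f : MCM) (ρ : ℝ) (hirr : Irrational ρ) (hmem : ρ ∈ Set.Ioo (0 : ℝ) 1)
    (hrot : HasRotationNumber f.F ρ) (n : ℕ) (x y : ℝ)
    (h : sptAdj f (qDen ρ n) (pNum ρ n) x y) (i : ℕ) (hi : i < qDen ρ n) :
    f.F^[i] y < f.F^[i] x + 1 := by
  by_contra hc
  push Not at hc
  have hm := spt_iter_mono f i h.1
  have := spt_disj f ρ hirr hmem hrot n x y h i i hi hi 1 (by push_cast; linarith)
    (by push_cast; linarith)
  exact one_ne_zero this.2

lemma spt_sum_len (f : MCM) (ρ : ℝ) (hirr : Irrational ρ) (hmem : ρ ∈ Set.Ioo (0 : ℝ) 1)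
    (hrot : HasRotationNumber f.F ρ) (n : ℕ) (x y : ℝ)
    (h : sptAdj f (qDen ρ n) (pNum ρ n) x y) :
    ∑ i ∈ Finset.range (qDen ρ n), (f.F^[i] y - f.F^[i] x) ≤ 2 := by
  set q := qDen ρ n
  let S : ℕ → Set ℝ := fun i =>
    Set.Ico (f.F^[i] x - ⌊f.F^[i] x⌋) (f.F^[i] y - ⌊f.F^[i] x⌋)
  have hd : Set.PairwiseDisjoint (↑(Finset.range q)) S := by
    intro i hi j hj hij
    simp only [Finset.coe_range, Set.mem_Iio] at hi hj
    refine Set.disjoint_left.2 fun t ht1 ht2 => hij ?_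
    simp only [S, Set.mem_Ico] at ht1 ht2
    exact (spt_disj f ρ hirr hmem hrot n x y h i j hi hj (⌊f.F^[i] x⌋ - ⌊f.F^[j] x⌋)
      (by push_cast; linarith) (by push_cast; linarith)).1
  have hsub : (⋃ i ∈ Finset.range q, S i) ⊆ Set.Ico (0:ℝ) 2 := by
    refine Set.iUnion₂_subset fun i hi t ht => ?_
    simp only [S, Set.mem_Ico] at ht
    have h1 := spt_len_one f ρ hirr hmem hrot n x y h i (Finset.mem_range.1 hi)
    have h2 := Int.floor_le (f.F^[i] x)
    have h3 := Int.lt_floor_add_one (f.F^[i] x)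
    constructor <;> linarith
  have hv := measure_mono (μ := volume) hsub
  rw [measure_biUnion_finset hd (fun i _ => measurableSet_Ico)] at hv
  simp only [S, Real.volume_Ico] at hv
  rw [← ENNReal.ofReal_sum_of_nonneg] at hv
  · have := (ENNReal.ofReal_le_ofReal_iff (by norm_num)).1 hv
    refine le_trans (le_of_eq (Finset.sum_congr rfl fun i _ => by ring)) (this.trans (by norm_num))
  · intro i _
    have hm := spt_iter_mono f i h.1
    linarith

open Classical in
/-- indicator that a translate of `c` lies in `[u, v]` -/
def sptHit (c u v : ℝ) : ℝ := if ∃ k : ℤ, u ≤ c + k ∧ c + k ≤ v then 1 else 0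

lemma spt_hit_nonneg (c u v : ℝ) : 0 ≤ sptHit c u v := by
  unfold sptHit; split_ifs <;> norm_num

lemma spt_sum_hit (f : MCM) (ρ : ℝ) (hirr : Irrational ρ) (hmem : ρ ∈ Set.Ioo (0 : ℝ) 1)
    (hrot : HasRotationNumber f.F ρ) (n : ℕ) (x y : ℝ)
    (h : sptAdj f (qDen ρ n) (pNum ρ n) x y) (c : ℝ) :
    ∑ i ∈ Finset.range (qDen ρ n), sptHit c (f.F^[i] x) (f.F^[i] y) ≤ 1 := by
  classical
  unfold sptHit
  rw [Finset.sum_ite, Finset.sum_const_zero, add_zero, Finset.sum_const, nsmul_eq_mul, mul_one]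
  norm_cast
  rw [Finset.card_le_one]
  intro i hi j hj
  simp only [Finset.mem_filter, Finset.mem_range] at hi hj
  obtain ⟨hi, k, hk1, hk2⟩ := hi
  obtain ⟨hj, l, hl1, hl2⟩ := hj
  exact (spt_disj f ρ hirr hmem hrot n x y h i j hi hj (k - l)
      (by push_cast; linarith) (by push_cast; linarith)).1

section local_analysis

variable {F : ℝ → ℝ}

lemma spt_d1 (hF : ContDiff ℝ 3 F) (x : ℝ) : HasDerivAt F (deriv F x) x :=
  ((hF.differentiable (by norm_num)) x).hasDerivAt

lemma spt_d2 (hF : ContDiff ℝ 3 F) (x : ℝ) : HasDerivAt (deriv F) (deriv (deriv F) x) x := by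
  have h : ContDiff ℝ 2 (deriv F) := by
    have := (contDiff_succ_iff_deriv (n := 2) (f := F)).1 (by norm_num; exact hF)
    exact this.2.2
  exact ((h.differentiable (by norm_num)) x).hasDerivAt

lemma spt_cd1 (hF : ContDiff ℝ 3 F) : ContDiff ℝ 2 (deriv F) :=
  ((contDiff_succ_iff_deriv (n := 2) (f := F)).1 (by norm_num; exact hF)).2.2

lemma spt_cd2 (hF : ContDiff ℝ 3 F) : ContDiff ℝ 1 (deriv (deriv F)) :=
  ((contDiff_succ_iff_deriv (n := 1) (f := deriv F)).1 (by norm_num; exact spt_cd1 hF)).2.2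

lemma spt_d3 (hF : ContDiff ℝ 3 F) (x : ℝ) :
    HasDerivAt (deriv (deriv F)) (deriv (deriv (deriv F)) x) x :=
  (((spt_cd2 hF).differentiable (by norm_num)) x).hasDerivAt

lemma spt_schw (hF : ContDiff ℝ 3 F) (x : ℝ) (hx : 0 < deriv F x) :
    schwarzianDeriv F x = deriv (deriv (deriv F)) x / deriv F x
      - (3 / 2) * (deriv (deriv F) x / deriv F x) ^ 2 := by
  unfold schwarzianDeriv
  have := ((spt_d3 hF x).div (spt_d2 hF x) hx.ne').deriv
  change deriv (fun y => deriv (deriv F) y / deriv F y) x = _ at this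
  rw [this]
  field_simp; ring

lemma spt_N1 (hF : ContDiff ℝ 3 F) (σ e x : ℝ) (hx : 0 < deriv F x) :
    HasDerivAt (fun y => σ * (F y - F e) / √(deriv F y))
      (σ * (√(deriv F x) - (F x - F e) * deriv (deriv F) x / (2 * (deriv F x * √(deriv F x))))) x := by
  have hs := Real.sqrt_pos.2 hx
  have h1 := (((spt_d1 hF x).sub_const (F e)).const_mul σ).div
    ((spt_d2 hF x).sqrt hx.ne') hs.ne'
  refine h1.congr_deriv ?_
  have h2 : √(deriv F x) ^ 2 = deriv F x := Real.sq_sqrt hx.le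
  generalize hg : √(deriv F x) = g at *
  rw [← h2]
  field_simp

lemma spt_N2 (hF : ContDiff ℝ 3 F) (σ e x : ℝ) (hx : 0 < deriv F x) :
    HasDerivAt (fun y => σ * (√(deriv F y) -
        (F y - F e) * deriv (deriv F) y / (2 * (deriv F y * √(deriv F y)))))
      (σ * (F x - F e) * (- schwarzianDeriv F x) / (2 * √(deriv F x))) x := by
  have hs := Real.sqrt_pos.2 hx
  have hsq := (spt_d2 hF x).sqrt hx.ne'
  have h1 := (hsq.sub ((((spt_d1 hF x).sub_const (F e)).mul (spt_d3 hF x)).div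
    (((spt_d2 hF x).mul hsq).const_mul 2) (mul_ne_zero two_ne_zero (mul_pos hx hs).ne'))).const_mul σ
  refine h1.congr_deriv ?_
  rw [spt_schw hF x hx]
  have h2 : √(deriv F x) ^ 2 = deriv F x := Real.sq_sqrt hx.le
  simp only [Pi.mul_apply]
  generalize hg : √(deriv F x) = g at *
  rw [← h2]
  field_simp
  ring

lemma spt_N_convex (hF : ContDiff ℝ 3 F) (σ e a d : ℝ)
    (hpos : ∀ x ∈ Set.Icc a d, 0 < deriv F x) (hS : ∀ x ∈ Set.Icc a d, schwarzianDeriv F x ≤ 0)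
    (hσ : ∀ x ∈ Set.Icc a d, 0 ≤ σ * (F x - F e)) :
    ConvexOn ℝ (Set.Icc a d) (fun y => σ * (F y - F e) / √(deriv F y)) := by
  refine convexOn_of_hasDerivWithinAt2_nonneg (convex_Icc a d)
    (f' := fun x => (σ * (√(deriv F x) - (F x - F e) * deriv (deriv F) x /
      (2 * (deriv F x * √(deriv F x))))))
    (f'' := fun x => (σ * (F x - F e) * (- schwarzianDeriv F x) / (2 * √(deriv F x)))) ?_ ?_ ?_ ?_
  · exact fun x hx => (spt_N1 hF σ e x (hpos x hx)).continuousAt.continuousWithinAt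
  · exact fun x hx => (spt_N1 hF σ e x (hpos x (interior_subset hx))).hasDerivWithinAt
  · exact fun x hx => (spt_N2 hF σ e x (hpos x (interior_subset hx))).hasDerivWithinAt
  · intro x hx
    have hx := interior_subset hx
    have := hS x hx
    have := hσ x hx
    have := hpos x hx
    have : 0 ≤ - schwarzianDeriv F x := by linarith
    positivity

def sptCr (a b c d : ℝ) : ℝ := (b - a) * (d - c) / ((c - a) * (d - b))

/-- slope form of cross ratio bounds -/
lemma spt_cr_of_slope (hF : StrictMono F) {a b c d E : ℝ} (hab : a < b) (hbc : b < c) (hcd : c < d)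
    (h : (F b - F a) / (b - a) * ((F d - F c) / (d - c)) ≤
      E * ((F c - F a) / (c - a) * ((F d - F b) / (d - b)))) :
    sptCr (F a) (F b) (F c) (F d) ≤ E * sptCr a b c d := by
  unfold sptCr
  have h1 := hF hab
  have h2 := hF hbc
  have h3 := hF hcd
  have : 0 < b - a := by linarith
  have : 0 < c - a := by linarith
  have : 0 < d - b := by linarith
  have : 0 < d - c := by linarith
  have : 0 < F b - F a := by linarith
  have : 0 < F c - F a := by linarith
  have : 0 < F d - F b := by linarith
  have : 0 < F d - F c := by linarith
  rw [div_mul_div_comm, div_mul_div_comm, mul_div_assoc', div_le_div_iff₀ (by positivity) (by positivity)] at h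
  rw [mul_div_assoc', div_le_div_iff₀ (by positivity) (by positivity)]
  linarith

lemma spt_neg_schw (hF : ContDiff ℝ 3 F) (hm : StrictMono F) {a b c d : ℝ}
    (hab : a < b) (hbc : b < c) (hcd : c < d)
    (hpos : ∀ x ∈ Set.Icc a d, 0 < deriv F x)
    (hS : ∀ x ∈ Set.Icc a d, schwarzianDeriv F x ≤ 0) :
    sptCr (F a) (F b) (F c) (F d) ≤ sptCr a b c d := by
  rw [← one_mul (sptCr a b c d)]
  refine spt_cr_of_slope hm hab hbc hcd ?_
  rw [one_mul]
  have ha : a ∈ Set.Icc a d := ⟨by linarith, by linarith⟩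
  have hb : b ∈ Set.Icc a d := ⟨by linarith, by linarith⟩
  have hc : c ∈ Set.Icc a d := ⟨by linarith, by linarith⟩
  have hd : d ∈ Set.Icc a d := ⟨by linarith, by linarith⟩
  have c1 := (spt_N_convex hF 1 a a d hpos hS (fun x hx => by
    have := hm.monotone hx.1; linarith)).secant_mono ha hb hc hab.ne' (hab.trans hbc).ne' hbc.le
  have c2 := (spt_N_convex hF (-1) d a d hpos hS (fun x hx => by
    have := hm.monotone hx.2; linarith)).secant_mono hd hb hc (hbc.trans hcd).ne hcd.ne hbc.le
  have sb := Real.sqrt_pos.2 (hpos b hb)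
  have sc := Real.sqrt_pos.2 (hpos c hc)
  simp only [sub_self, mul_zero, zero_div, sub_zero, one_mul] at c1 c2
  have h1 := hm hab
  have h2 := hm hbc
  have h3 := hm hcd
  have k1 : 0 < b - a := by linarith
  have k2 : 0 < c - a := by linarith
  have k3 : 0 < d - b := by linarith
  have k4 : 0 < d - c := by linarith
  have l1 : 0 < F b - F a := by linarith
  have l2 : 0 < F c - F a := by linarith
  have l3 : 0 < F d - F b := by linarith
  have l4 : 0 < F d - F c := by linarith
  have e1 : -1 * (F b - F d) / √(deriv F b) / (b - d) = -((F d - F b) / √(deriv F b) / (d - b)) := by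
    rw [← neg_sub d b, div_neg]; ring
  have e2 : -1 * (F c - F d) / √(deriv F c) / (c - d) = -((F d - F c) / √(deriv F c) / (d - c)) := by
    rw [← neg_sub d c, div_neg]; ring
  rw [e1, e2, neg_le_neg_iff] at c2
  have := mul_le_mul c1 c2 (by positivity) (by positivity)
  have t1 : (F b - F a) / √(deriv F b) / (b - a) * ((F d - F c) / √(deriv F c) / (d - c))
    = ((F b - F a) / (b - a) * ((F d - F c) / (d - c))) / (√(deriv F b) * √(deriv F c)) := by
    field_simp
  have t2 : (F c - F a) / √(deriv F c) / (c - a) * ((F d - F b) / √(deriv F b) / (d - b))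
    = ((F c - F a) / (c - a) * ((F d - F b) / (d - b))) / (√(deriv F b) * √(deriv F c)) := by
    field_simp
  rw [t1, t2] at this
  exact (div_le_div_iff_of_pos_right (by positivity)).1 this

lemma spt_mvt (hF : ContDiff ℝ 3 F) {a b : ℝ} (hab : a < b) :
    ∃ ξ ∈ Set.Ioo a b, deriv F ξ = (F b - F a) / (b - a) :=
  exists_deriv_eq_slope F hab hF.continuous.continuousOn
    (hF.differentiable (by norm_num)).differentiableOn

/-- power law: sup of derivative bounded by average -/
lemma spt_power (hF : ContDiff ℝ 3 F) (hm : StrictMono F) {c al be s a b x : ℝ} (hs : 1 < s) (hal : 0 < al) (hbe : al < be)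
    (hab : a < b) (hx : x ∈ Set.Icc a b) (hc : deriv F c = 0)
    (hpl : ∀ y ∈ Set.Icc a b, y ≠ c →
      al * |y - c| ^ (s - 1) < deriv F y ∧ deriv F y < be * |y - c| ^ (s - 1)) :
    deriv F x * (b - a) ≤ (4 * (be / al) * 2 ^ (s - 1)) * (F b - F a) := by
  have hs' : 0 ≤ s - 1 := by linarith
  -- a point where the derivative is large
  have key : ∃ ξ ∈ Set.Icc a b, deriv F ξ * ((b - a) / 4) ≤ F b - F a ∧ ξ ≠ c ∧
      |x - c| ≤ 2 * |ξ - c| := by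
    rcases le_total (c - a) (b - c) with h | h
    · obtain ⟨ξ, hξ, h1⟩ := spt_mvt hF (show b - (b - a) / 4 < b by linarith)
      have h2 : ξ ∈ Set.Icc a b := ⟨by linarith [hξ.1], hξ.2.le⟩
      have h3 : (b - c) / 2 ≤ ξ - c := by linarith [hξ.1]
      have h5 : 0 < b - c := by linarith
      refine ⟨ξ, h2, ?_, by intro h; subst h; linarith, ?_⟩
      · have := hm.monotone (show a ≤ b - (b - a) / 4 by linarith)
        rw [h1, show b - (b - (b - a) / 4) = (b - a) / 4 by ring, div_mul_cancel₀ _ (by linarith)]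
        linarith
      · have := le_abs_self (ξ - c)
        refine abs_le.2 ⟨?_, ?_⟩ <;> linarith [hx.1, hx.2]
    · obtain ⟨ξ, hξ, h1⟩ := spt_mvt hF (show a < a + (b - a) / 4 by linarith)
      have h2 : ξ ∈ Set.Icc a b := ⟨hξ.1.le, by linarith [hξ.2]⟩
      have h3 : (c - a) / 2 ≤ c - ξ := by linarith [hξ.2]
      have h5 : 0 < c - a := by linarith
      refine ⟨ξ, h2, ?_, by intro h; subst h; linarith, ?_⟩
      · have := hm.monotone (show a + (b - a) / 4 ≤ b by linarith)
        rw [h1, show (a + (b - a) / 4) - a = (b - a) / 4 by ring, div_mul_cancel₀ _ (by linarith)]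
        linarith
      · have := neg_le_abs (ξ - c)
        refine abs_le.2 ⟨?_, ?_⟩ <;> linarith [hx.1, hx.2]
  obtain ⟨ξ, hξ, h1, h2, h3⟩ := key
  have h4 := (hpl ξ hξ h2).1
  have hx1 : deriv F x ≤ be * |x - c| ^ (s - 1) := by
    by_cases hxc : x = c
    · rw [hxc, hc]
      have : 0 < be := by linarith
      positivity
    · exact (hpl x hx hxc).2.le
  have h5 : |x - c| ^ (s - 1) ≤ 2 ^ (s - 1) * |ξ - c| ^ (s - 1) := by
    rw [← Real.mul_rpow (by norm_num) (abs_nonneg _)]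
    exact Real.rpow_le_rpow (abs_nonneg _) h3 hs'
  have hbe0 : 0 < be := by linarith
  have h6 : deriv F x ≤ (be / al) * 2 ^ (s - 1) * deriv F ξ := by
    calc deriv F x ≤ be * (2 ^ (s - 1) * |ξ - c| ^ (s - 1)) := by
          refine hx1.trans ?_; gcongr
      _ = (be / al) * 2 ^ (s - 1) * (al * |ξ - c| ^ (s - 1)) := by field_simp
      _ ≤ _ := by gcongr
  calc deriv F x * (b - a) ≤ (be / al) * 2 ^ (s - 1) * deriv F ξ * (b - a) := by
        gcongr
    _ = (4 * (be / al) * 2 ^ (s - 1)) * (deriv F ξ * ((b - a) / 4)) := by ring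
    _ ≤ _ := by gcongr

end local_analysis

lemma spt_deriv_int (f : MCM) (x : ℝ) (k : ℤ) : deriv f.F (x + k) = deriv f.F x := by
  rw [← deriv_comp_add_const, show (fun y => f.F (y + k)) = fun y => f.F y + k from
    funext fun y => spt_F_int f y k, deriv_add_const]

lemma spt_deriv2_int (f : MCM) (x : ℝ) (k : ℤ) :
    deriv (deriv f.F) (x + k) = deriv (deriv f.F) x := by
  rw [← deriv_comp_add_const, show (fun y => deriv f.F (y + k)) = fun y => deriv f.F y from
    funext fun y => spt_deriv_int f y k]

lemma spt_deriv_nonneg (f : MCM) (x : ℝ) : 0 ≤ deriv f.F x := f.mono.monotone.deriv_nonneg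

lemma spt_bdd (g : ℝ → ℝ) (hg : Continuous g) (hp : ∀ x (k : ℤ), g (x + k) = g x) :
    ∃ L : ℝ, 0 < L ∧ ∀ x, g x ≤ L := by
  obtain ⟨L, hL⟩ := (isCompact_Icc (a := (0:ℝ)) (b := 1)).bddAbove_image hg.continuousOn
  refine ⟨max L 1, by positivity, fun x => ?_⟩
  have h1 := hp (Int.fract x) ⌊x⌋
  rw [Int.fract_add_floor] at h1
  rw [h1]
  exact (hL ⟨_, ⟨Int.fract_nonneg x, (Int.fract_lt_one x).le⟩, rfl⟩).trans (le_max_left _ _)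

lemma spt_data (f : MCM) : ∃ r η L L2 : ℝ, 0 < r ∧ 0 < η ∧ 0 < L ∧ 0 < L2 ∧
    (∀ x, deriv f.F x ≤ L) ∧ (∀ x, |deriv (deriv f.F) x| ≤ L2) ∧
    (∀ i x, |x - f.c i| < 2 * r → x ∈ f.W i) ∧
    (∀ x, (∀ i (k : ℤ), r ≤ |x - (f.c i + k)|) → η ≤ deriv f.F x) ∧
    (∀ a, η ≤ f.F (a + r) - f.F a) := by
  have hF := f.smooth
  obtain ⟨L, hL0, hL⟩ := spt_bdd (deriv f.F) (spt_cd1 hF).continuous (spt_deriv_int f)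
  obtain ⟨L2, hL20, hL2⟩ := spt_bdd (fun x => |deriv (deriv f.F) x|) (spt_cd2 hF).continuous.abs
    (fun x k => by simp only [spt_deriv2_int])
  have h1 : ∀ i, ∃ ε > 0, Metric.ball (f.c i) ε ⊆ f.W i := fun i =>
    Metric.isOpen_iff.1 (f.W_open i) _ (f.c_mem_W i)
  choose ε hε hεW using h1
  obtain ⟨r0, hr0, hr0'⟩ : ∃ r0 > 0, ∀ i, r0 ≤ ε i := by
    have : Nonempty (Fin f.N) := ⟨⟨0, f.N_pos⟩⟩
    obtain ⟨i0, hi0⟩ := Finite.exists_min ε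
    exact ⟨ε i0, hε i0, hi0⟩
  set r := r0 / 2
  have hr : 0 < r := by positivity
  -- displacement bound
  obtain ⟨e1, he1, he1'⟩ : ∃ η > 0, ∀ a, η ≤ f.F (a + r) - f.F a := by
    obtain ⟨x0, _, hx0⟩ := (isCompact_Icc (a := (0:ℝ)) (b := 1)).exists_isMinOn
      ⟨0, by simp⟩ (f := fun a => f.F (a + r) - f.F a)
      (by have := hF.continuous; fun_prop)
    refine ⟨f.F (x0 + r) - f.F x0, by have := f.mono (show x0 < x0 + r by linarith); linarith, ?_⟩
    intro a
    have h2 := hx0 (show Int.fract a ∈ Set.Icc (0:ℝ) 1 from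
      ⟨Int.fract_nonneg a, (Int.fract_lt_one a).le⟩)
    simp only [Set.mem_ofPred_eq] at h2
    have h3 := spt_F_int f (Int.fract a) ⌊a⌋
    have h4 := spt_F_int f (Int.fract a + r) ⌊a⌋
    rw [Int.fract_add_floor] at h3
    rw [show Int.fract a + r + ⌊a⌋ = a + r by linarith [Int.fract_add_floor a]] at h4
    linarith
  obtain ⟨e2, he2, he2'⟩ : ∃ η > 0, ∀ x, (∀ i (k : ℤ), r ≤ |x - (f.c i + k)|) → η ≤ deriv f.F x := by
    let S : Set ℝ := Set.Icc 0 1 ∩ {x | ∀ i (k : ℤ), r ≤ |x - (f.c i + k)|}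
    have hS : IsCompact S := by
      refine isCompact_Icc.inter_right ?_
      simp only [Set.ofPred_forall]
      refine isClosed_iInter fun i => isClosed_iInter fun k => ?_
      exact isClosed_le continuous_const (by fun_prop)
    have hfr : ∀ x, (∀ i (k : ℤ), r ≤ |x - (f.c i + k)|) → Int.fract x ∈ S := by
      intro x hx
      refine ⟨⟨Int.fract_nonneg x, (Int.fract_lt_one x).le⟩, fun i k => ?_⟩
      have := hx i (k + ⌊x⌋)
      rw [← Int.self_sub_floor]
      push_cast at this
      rwa [show x - ⌊x⌋ - (f.c i + k) = x - (f.c i + (k + ⌊x⌋)) by ring]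
    rcases S.eq_empty_or_nonempty with he | hne
    · refine ⟨1, one_pos, fun x hx => ?_⟩
      have := hfr x hx
      rw [he] at this
      exact this.elim
    · obtain ⟨x0, hx0S, hx0⟩ := hS.exists_isMinOn hne (spt_cd1 hF).continuous.continuousOn
      refine ⟨deriv f.F x0, ?_, fun x hx => ?_⟩
      · refine lt_of_le_of_ne (spt_deriv_nonneg f x0) fun h => ?_
        obtain ⟨i, k, hik⟩ := f.critOnly x0 h.symm
        have := hx0S.2 i k
        rw [hik, sub_self, abs_zero] at this
        linarith
      · have h1 := spt_deriv_int f (Int.fract x) ⌊x⌋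
        rw [Int.fract_add_floor] at h1
        rw [h1]
        exact hx0 (hfr x hx)
  refine ⟨r, min e1 e2, L, L2, hr, lt_min he1 he2, hL0, hL20, hL, hL2, ?_, ?_, ?_⟩
  · intro i x hx
    refine hεW i ?_
    rw [Metric.mem_ball, Real.dist_eq]
    have := hr0' i
    simp only [r] at hx
    linarith
  · exact fun x hx => (min_le_right _ _).trans (he2' x hx)
  · exact fun a => (min_le_left _ _).trans (he1' a)

lemma spt_RH (f : MCM) : ∃ C : ℝ, 1 ≤ C ∧ ∀ a b x, a < b → b ≤ a + 3 → x ∈ Set.Icc a b →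
    deriv f.F x * (b - a) ≤ C * (f.F b - f.F a) := by
  obtain ⟨r, η, L, L2, hr, hη, hL0, hL20, hL, hL2, hW, haway, hdisp⟩ := spt_data f
  set P : Fin f.N → ℝ := fun i => 4 * (f.be i / f.al i) * 2 ^ (f.s i - 1)
  have hP : ∀ i, 0 ≤ P i := fun i => by
    have := f.al_pos i
    have := f.al_lt_be i
    have : 0 < f.be i := by linarith
    positivity
  have hPs : 0 ≤ ∑ i, P i := Finset.sum_nonneg fun i _ => hP i
  have hLη : 0 < L / η := by positivity
  refine ⟨3 * (L / η) + ∑ i, P i + 1, by linarith, ?_⟩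
  intro a b x hab hb3 hx
  have hFab := f.mono hab
  have up : ∀ t, deriv f.F x * (b - a) ≤ t * (f.F b - f.F a) →
      t ≤ 3 * (L / η) + ∑ i, P i + 1 →
      deriv f.F x * (b - a) ≤ (3 * (L / η) + ∑ i, P i + 1) * (f.F b - f.F a) := by
    intro t h1 h2
    refine h1.trans (mul_le_mul_of_nonneg_right h2 (by linarith))
  rcases le_or_gt r (b - a) with hlong | hshort
  · refine up (3 * (L / η)) ?_ (by linarith)
    have h1 := hdisp a
    have h2 := f.mono.monotone (show a + r ≤ b by linarith)
    calc deriv f.F x * (b - a) ≤ L * 3 :=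
          mul_le_mul (hL x) (by linarith) (by linarith) hL0.le
      _ = 3 * (L / η) * η := by field_simp
      _ ≤ _ := by
        apply mul_le_mul_of_nonneg_left _ (by positivity)
        linarith
  by_cases hnear : ∃ y ∈ Set.Icc a b, ∃ i, ∃ k : ℤ, |y - (f.c i + k)| < r
  · obtain ⟨y, hy, i, k, hyk⟩ := hnear
    refine up (P i) ?_ (by
      have := Finset.single_le_sum (f := P) (fun i _ => hP i) (Finset.mem_univ i)
      linarith)
    have h1 := spt_power f.smooth f.mono (a := a + (-k : ℤ)) (b := b + (-k : ℤ))
      (x := x + (-k : ℤ)) (f.s_gt_one i) (f.al_pos i) (f.al_lt_be i) (by linarith)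
      ⟨by linarith [hx.1], by linarith [hx.2]⟩ (f.isCrit i) (by
        intro t ht htc
        refine f.powerLaw i t (hW i t ?_) htc
        push_cast at ht
        rw [abs_lt] at hyk ⊢
        constructor <;> linarith [ht.1, ht.2, hy.1, hy.2])
    rw [spt_deriv_int, spt_F_int, spt_F_int] at h1
    simpa using h1
  · push Not at hnear
    refine up (L / η) ?_ (by linarith)
    obtain ⟨ξ, hξ, h1⟩ := spt_mvt f.smooth hab
    have h2 := haway ξ fun i k => hnear ξ ⟨hξ.1.le, hξ.2.le⟩ i k
    have h3 : f.F b - f.F a = deriv f.F ξ * (b - a) := by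
      rw [h1, div_mul_cancel₀ _ (by linarith)]
    rw [h3, ← mul_assoc]
    refine mul_le_mul_of_nonneg_right ?_ (by linarith)
    calc deriv f.F x ≤ L := hL x
      _ = L / η * η := by field_simp
      _ ≤ _ := by gcongr

lemma spt_cr_nonneg {a b c d : ℝ} (hab : a < b) (hbc : b < c) (hcd : c < d) :
    0 < sptCr a b c d := by
  unfold sptCr
  have : 0 < b - a := by linarith
  have : 0 < c - a := by linarith
  have : 0 < d - b := by linarith
  have : 0 < d - c := by linarith
  positivity

lemma spt_cr_add (a b c d t : ℝ) : sptCr (a + t) (b + t) (c + t) (d + t) = sptCr a b c d := by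
  unfold sptCr; simp only [add_sub_add_right_eq_sub]

lemma spt_step_any (f : MCM) : ∃ C : ℝ, 1 ≤ C ∧ ∀ a b c d, a < b → b < c → c < d → d ≤ a + 3 →
    sptCr (f.F a) (f.F b) (f.F c) (f.F d) ≤ C * sptCr a b c d := by
  obtain ⟨C, hC, h⟩ := spt_RH f
  refine ⟨C * C, by nlinarith, fun a b c d hab hbc hcd hd => spt_cr_of_slope f.mono hab hbc hcd ?_⟩
  obtain ⟨ξ, hξ, h1⟩ := spt_mvt f.smooth hab
  obtain ⟨ζ, hζ, h2⟩ := spt_mvt f.smooth hcd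
  rw [← h1, ← h2]
  have g1 := h a c ξ (by linarith) (by linarith) ⟨hξ.1.le, by linarith [hξ.2]⟩
  have g2 := h b d ζ (by linarith) (by linarith) ⟨by linarith [hζ.1], hζ.2.le⟩
  rw [← le_div_iff₀ (by linarith), mul_div_assoc] at g1 g2
  have := mul_le_mul g1 g2 (spt_deriv_nonneg f _) ((spt_deriv_nonneg f _).trans g1)
  linarith

lemma spt_step_short (f : MCM) : ∃ r K : ℝ, 0 < r ∧ 0 ≤ K ∧ ∀ a b c d, a < b → b < c → c < d →
    d - a < r → (∃ i, ∃ k : ℤ, f.c i + k ∈ Set.Icc a d) ∨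
    sptCr (f.F a) (f.F b) (f.F c) (f.F d) ≤ Real.exp (K * (d - a)) * sptCr a b c d := by
  obtain ⟨r, η, L, L2, hr, hη, hL0, hL20, hL, hL2, hW, haway, hdisp⟩ := spt_data f
  refine ⟨r, 2 * (L2 / η), hr, by positivity, fun a b c d hab hbc hcd hshort => ?_⟩
  by_cases hcrit : ∃ i, ∃ k : ℤ, f.c i + k ∈ Set.Icc a d
  · exact Or.inl hcrit
  right
  by_cases hnear : ∃ y ∈ Set.Icc a d, ∃ i, ∃ k : ℤ, |y - (f.c i + k)| < r
  · obtain ⟨y, hy, i, k, hyk⟩ := hnear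
    have hw : ∀ x ∈ Set.Icc (a + (-k : ℤ)) (d + (-k : ℤ)), x ∈ f.W i ∧ x ≠ f.c i := by
      intro t ht
      refine ⟨hW i t ?_, ?_⟩
      · push_cast at ht
        rw [abs_lt] at hyk ⊢
        constructor <;> linarith [ht.1, ht.2, hy.1, hy.2]
      · rintro rfl
        push_cast at ht
        exact hcrit ⟨i, k, by linarith [ht.1], by linarith [ht.2]⟩
    have h1 := spt_neg_schw f.smooth f.mono (a := a + (-k : ℤ)) (b := b + (-k : ℤ))
      (c := c + (-k : ℤ)) (d := d + (-k : ℤ)) (by linarith) (by linarith) (by linarith)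
      (fun x hx => by
        have h2 := (f.powerLaw i x (hw x hx).1 (hw x hx).2).1
        have := f.al_pos i
        refine lt_of_le_of_lt ?_ h2
        positivity)
      (fun x hx => (f.negSchwarzian i x (hw x hx).1 (hw x hx).2).le)
    simp only [spt_F_int, spt_cr_add] at h1
    refine h1.trans ?_
    have h2 : 1 ≤ Real.exp (2 * (L2 / η) * (d - a)) :=
      Real.one_le_exp (mul_nonneg (by positivity) (by linarith))
    have h3 := spt_cr_nonneg hab hbc hcd
    nlinarith
  · push Not at hnear
    have hlow : ∀ x ∈ Set.Icc a d, η ≤ deriv f.F x := fun x hx => haway x fun i k => hnear x hx i k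
    have hlip : ∀ x ∈ Set.Icc a d, ∀ y ∈ Set.Icc a d,
        deriv f.F x ≤ Real.exp (L2 / η * (d - a)) * deriv f.F y := by
      intro x hx y hy
      have h1 : |deriv f.F x - deriv f.F y| ≤ L2 * |x - y| := by
        have := Convex.norm_image_sub_le_of_norm_deriv_le (f := deriv f.F) (C := L2)
          (s := Set.univ) (x := y) (y := x)
          (fun t _ => (spt_d2 f.smooth t).differentiableAt) (fun t _ => hL2 t) convex_univ
          (Set.mem_univ _) (Set.mem_univ _)
        simpa using this
      have h2 : |x - y| ≤ d - a := by
        rw [abs_le]; constructor <;> linarith [hx.1, hx.2, hy.1, hy.2]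
      have h3 := le_abs_self (deriv f.F x - deriv f.F y)
      have h4 := Real.add_one_le_exp (L2 / η * (d - a))
      have h5 := hlow y hy
      have hda : 0 < d - a := by linarith
      calc deriv f.F x ≤ deriv f.F y + L2 * (d - a) := by nlinarith
        _ = deriv f.F y + L2 / η * (d - a) * η := by field_simp
        _ ≤ deriv f.F y + L2 / η * (d - a) * deriv f.F y := by gcongr
        _ = (L2 / η * (d - a) + 1) * deriv f.F y := by ring
        _ ≤ _ := by gcongr; linarith
    apply spt_cr_of_slope f.mono hab hbc hcd
    obtain ⟨x1, hx1, e1⟩ := spt_mvt f.smooth hab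
    obtain ⟨x2, hx2, e2⟩ := spt_mvt f.smooth hcd
    obtain ⟨x3, hx3, e3⟩ := spt_mvt f.smooth (hab.trans hbc)
    obtain ⟨x4, hx4, e4⟩ := spt_mvt f.smooth (hbc.trans hcd)
    rw [← e1, ← e2, ← e3, ← e4]
    have m1 := hlip x1 ⟨by linarith [hx1.1], by linarith [hx1.2]⟩ x3
      ⟨by linarith [hx3.1], by linarith [hx3.2]⟩
    have m2 := hlip x2 ⟨by linarith [hx2.1], by linarith [hx2.2]⟩ x4
      ⟨by linarith [hx4.1], by linarith [hx4.2]⟩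
    have := mul_le_mul m1 m2 (spt_deriv_nonneg f _) ((spt_deriv_nonneg f _).trans m1)
    rw [show 2 * (L2 / η) * (d - a) = L2 / η * (d - a) + L2 / η * (d - a) by ring, Real.exp_add]
    linarith

lemma spt_step (f : MCM) : ∃ K D : ℝ, 0 ≤ K ∧ 0 ≤ D ∧ ∀ a b c d, a < b → b < c → c < d →
    d ≤ a + 3 → sptCr (f.F a) (f.F b) (f.F c) (f.F d) ≤
      Real.exp (K * (d - a) + D * ∑ i, sptHit (f.c i) a d) * sptCr a b c d := by
  obtain ⟨C, hC, hany⟩ := spt_step_any f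
  obtain ⟨r, K, hr, hK, hshort⟩ := spt_step_short f
  have hlog : 0 ≤ Real.log C := Real.log_nonneg hC
  have hq : 0 ≤ Real.log C / r := by positivity
  refine ⟨K + Real.log C / r, Real.log C, by positivity, hlog, ?_⟩
  intro a b c d hab hbc hcd hd
  have hcr := spt_cr_nonneg hab hbc hcd
  have hda : 0 < d - a := by linarith
  have hsum : 0 ≤ ∑ i, sptHit (f.c i) a d := Finset.sum_nonneg fun i _ => spt_hit_nonneg _ _ _
  have hKd : 0 ≤ K * (d - a) := by positivity
  have hqd : 0 ≤ Real.log C / r * (d - a) := by positivity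
  have hD : 0 ≤ Real.log C * ∑ i, sptHit (f.c i) a d := by positivity
  have fin : ∀ t, sptCr (f.F a) (f.F b) (f.F c) (f.F d) ≤ Real.exp t * sptCr a b c d →
      t ≤ (K + Real.log C / r) * (d - a) + Real.log C * ∑ i, sptHit (f.c i) a d →
      sptCr (f.F a) (f.F b) (f.F c) (f.F d) ≤
      Real.exp ((K + Real.log C / r) * (d - a) + Real.log C * ∑ i, sptHit (f.c i) a d)
        * sptCr a b c d := by
    intro t h1 h2
    exact h1.trans (mul_le_mul_of_nonneg_right (Real.exp_le_exp.2 h2) hcr.le)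
  have hany' := hany a b c d hab hbc hcd hd
  rw [← Real.exp_log (show 0 < C by linarith)] at hany'
  rcases le_or_gt r (d - a) with h | h
  · refine fin _ hany' ?_
    have : Real.log C ≤ Real.log C / r * (d - a) := by
      calc Real.log C = Real.log C / r * r := by field_simp
        _ ≤ _ := by gcongr
    linarith
  · rcases hshort a b c d hab hbc hcd h with ⟨i, k, hik⟩ | h1
    · refine fin _ hany' ?_
      have h1 : sptHit (f.c i) a d = 1 := by
        unfold sptHit; exact if_pos ⟨k, hik.1, hik.2⟩
      have h2 := Finset.single_le_sum (f := fun i => sptHit (f.c i) a d)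
        (fun i _ => spt_hit_nonneg _ _ _) (Finset.mem_univ i)
      simp only [h1] at h2
      nlinarith
    · refine fin _ h1 ?_
      linarith

lemma spt_hit_le (c u m v : ℝ) : sptHit c u v ≤ sptHit c u m + sptHit c m v := by
  by_cases h : ∃ k : ℤ, u ≤ c + k ∧ c + k ≤ v
  · obtain ⟨k, h1, h2⟩ := h
    have h3 : sptHit c u v ≤ 1 := by unfold sptHit; split_ifs <;> norm_num
    rcases le_total (c + k) m with h4 | h4
    · have : sptHit c u m = 1 := by unfold sptHit; exact if_pos ⟨k, h1, h4⟩
      linarith [spt_hit_nonneg c m v]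
    · have : sptHit c m v = 1 := by unfold sptHit; exact if_pos ⟨k, h4, h2⟩
      linarith [spt_hit_nonneg c u m]
  · have : sptHit c u v = 0 := by unfold sptHit; exact if_neg h
    linarith [spt_hit_nonneg c u m, spt_hit_nonneg c m v]

/-- the cross-ratio inequality for the return map -/
lemma spt_cross (f : MCM) (ρ : ℝ) (hirr : Irrational ρ) (hmem : ρ ∈ Set.Ioo (0 : ℝ) 1)
    (hrot : HasRotationNumber f.F ρ) : ∃ B : ℝ, 1 ≤ B ∧ ∀ n y0 y1 y2 y3,
      sptAdj f (qDen ρ n) (pNum ρ n) y0 y1 → sptAdj f (qDen ρ n) (pNum ρ n) y1 y2 →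
      sptAdj f (qDen ρ n) (pNum ρ n) y2 y3 →
      sptCr (f.F^[qDen ρ n] y0) (f.F^[qDen ρ n] y1) (f.F^[qDen ρ n] y2) (f.F^[qDen ρ n] y3) ≤
        B * sptCr y0 y1 y2 y3 := by
  obtain ⟨K, D, hK, hD, hstep⟩ := spt_step f
  refine ⟨Real.exp (3 * (K * 2 + D * f.N)), Real.one_le_exp (by positivity), ?_⟩
  intro n y0 y1 y2 y3 h01 h12 h23
  have hcr := spt_cr_nonneg h01.1 h12.1 h23.1
  set q := qDen ρ n
  let κ : ℝ → ℝ → ℕ → ℝ := fun u v i =>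
    K * (f.F^[i] v - f.F^[i] u) + D * ∑ j, sptHit (f.c j) (f.F^[i] u) (f.F^[i] v)
  have hκ : ∀ u v, sptAdj f q (pNum ρ n) u v → ∑ i ∈ Finset.range q, κ u v i ≤ K * 2 + D * f.N := by
    intro u v huv
    simp only [κ]
    rw [Finset.sum_add_distrib, ← Finset.mul_sum, ← Finset.mul_sum, Finset.sum_comm]
    have h1 := spt_sum_len f ρ hirr hmem hrot n u v huv
    have h2 : ∑ j, ∑ i ∈ Finset.range q, sptHit (f.c j) (f.F^[i] u) (f.F^[i] v) ≤ f.N := by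
      calc _ ≤ ∑ j : Fin f.N, (1:ℝ) :=
            Finset.sum_le_sum fun j _ => spt_sum_hit f ρ hirr hmem hrot n u v huv (f.c j)
        _ = f.N := by simp
    gcongr
  have hsplit : ∀ u m v i, κ u v i ≤ κ u m i + κ m v i := by
    intro u m v i
    have h1 : ∑ j, sptHit (f.c j) (f.F^[i] u) (f.F^[i] v) ≤
        ∑ j, sptHit (f.c j) (f.F^[i] u) (f.F^[i] m) + ∑ j, sptHit (f.c j) (f.F^[i] m) (f.F^[i] v) := by
      rw [← Finset.sum_add_distrib]
      exact Finset.sum_le_sum fun j _ => spt_hit_le _ _ _ _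
    simp only [κ]
    nlinarith
  have hit : ∀ m ≤ q, sptCr (f.F^[m] y0) (f.F^[m] y1) (f.F^[m] y2) (f.F^[m] y3) ≤
      Real.exp (∑ i ∈ Finset.range m, κ y0 y3 i) * sptCr y0 y1 y2 y3 := by
    intro m
    induction m with
    | zero => intro _; simp
    | succ m ih =>
      intro hm
      have hm' : m < q := hm
      have ih := ih hm'.le
      have l1 := spt_len_one f ρ hirr hmem hrot n _ _ h01 m hm'
      have l2 := spt_len_one f ρ hirr hmem hrot n _ _ h12 m hm'
      have l3 := spt_len_one f ρ hirr hmem hrot n _ _ h23 m hm'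
      have h1 := hstep _ _ _ _ (spt_iter_mono f m h01.1) (spt_iter_mono f m h12.1)
        (spt_iter_mono f m h23.1) (by linarith)
      simp only [Function.iterate_succ_apply']
      refine h1.trans ?_
      rw [Finset.sum_range_succ, Real.exp_add (∑ i ∈ Finset.range m, κ y0 y3 i),
        mul_comm (Real.exp (∑ i ∈ Finset.range m, κ y0 y3 i)), mul_assoc]
      exact mul_le_mul_of_nonneg_left ih (Real.exp_pos _).le
  refine (hit q le_rfl).trans (mul_le_mul_of_nonneg_right (Real.exp_le_exp.2 ?_) hcr.le)
  clear_value κ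
  calc ∑ i ∈ Finset.range q, κ y0 y3 i
      ≤ ∑ i ∈ Finset.range q, (κ y0 y1 i + (κ y1 y2 i + κ y2 y3 i)) :=
        Finset.sum_le_sum fun i _ => by
          have := hsplit y0 y1 y3 i
          have := hsplit y1 y2 y3 i
          linarith
    _ ≤ _ := by
      rw [Finset.sum_add_distrib, Finset.sum_add_distrib]
      linarith [hκ _ _ h01, hκ _ _ h12, hκ _ _ h23]

lemma spt_surj (f : MCM) (q : ℕ) : Function.Surjective (f.F^[q]) := by
  have h : Function.Surjective f.F :=
    f.smooth.continuous.surjective (sptLift f).tendsto_atTop (sptLift f).tendsto_atBot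
  exact h.iterate q

/-- ratio for gap lengths -/
def sptR (x y z : ℝ) : ℝ := x * z / ((x + y) * (y + z))

lemma spt_sign (f : MCM) (ρ : ℝ) (hirr : Irrational ρ) (hmem : ρ ∈ Set.Ioo (0 : ℝ) 1)
    (hrot : HasRotationNumber f.F ρ) (n : ℕ) :
    (∀ x, x < f.F^[qDen ρ n] x - pNum ρ n) ∨ (∀ x, f.F^[qDen ρ n] x - pNum ρ n < x) := by
  have h0 := spt_e_ne hirr hmem n
  unfold sptE at h0
  rcases lt_or_gt_of_ne h0 with h | h
  · right
    intro x
    by_contra hc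
    push Not at hc
    have := spt_order f ρ hrot 0 (qDen ρ n) (pNum ρ n) 0 x (by
      simp only [Function.iterate_zero, id]; push_cast; linarith)
    push_cast at this
    linarith
  · left
    intro x
    by_contra hc
    push Not at hc
    have := spt_order f ρ hrot (qDen ρ n) 0 0 (pNum ρ n) x (by
      simp only [Function.iterate_zero, id]; push_cast; linarith)
    push_cast at this
    linarith

/-- cross ratio inequality for consecutive gaps of an orbit of the return map -/
lemma spt_gaps (f : MCM) (ρ : ℝ) (hirr : Irrational ρ) (hmem : ρ ∈ Set.Ioo (0 : ℝ) 1)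
    (hrot : HasRotationNumber f.F ρ) : ∃ B : ℝ, 1 ≤ B ∧ ∀ n x0 x1 x2 x3 x4,
      x1 = f.F^[qDen ρ n] x0 - pNum ρ n → x2 = f.F^[qDen ρ n] x1 - pNum ρ n →
      x3 = f.F^[qDen ρ n] x2 - pNum ρ n → x4 = f.F^[qDen ρ n] x3 - pNum ρ n →
      sptR |x2 - x1| |x3 - x2| |x4 - x3| ≤ B * sptR |x1 - x0| |x2 - x1| |x3 - x2| := by
  obtain ⟨B, hB, h⟩ := spt_cross f ρ hirr hmem hrot
  refine ⟨B, hB, ?_⟩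
  intro n x0 x1 x2 x3 x4 h1 h2 h3 h4
  have e : ∀ x, f.F^[qDen ρ n] x = (f.F^[qDen ρ n] x - pNum ρ n) + pNum ρ n := fun x => by ring
  rcases spt_sign f ρ hirr hmem hrot n with hs | hs
  · have l0 : x0 < x1 := h1 ▸ hs x0
    have l1 : x1 < x2 := h2 ▸ hs x1
    have l2 : x2 < x3 := h3 ▸ hs x2
    have l3 : x3 < x4 := h4 ▸ hs x3
    have := h n x0 x1 x2 x3 ⟨l0, Or.inl h1⟩ ⟨l1, Or.inl h2⟩ ⟨l2, Or.inl h3⟩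
    rw [e x0, e x1, e x2, e x3, spt_cr_add, ← h1, ← h2, ← h3, ← h4] at this
    rw [abs_of_pos (by linarith), abs_of_pos (by linarith), abs_of_pos (by linarith),
      abs_of_pos (by linarith)]
    unfold sptR
    unfold sptCr at this
    convert this using 3 <;> ring
  · have l0 : x1 < x0 := h1 ▸ hs x0
    have l1 : x2 < x1 := h2 ▸ hs x1
    have l2 : x3 < x2 := h3 ▸ hs x2
    have l3 : x4 < x3 := h4 ▸ hs x3
    have := h n x3 x2 x1 x0 ⟨l2, Or.inr h3⟩ ⟨l1, Or.inr h2⟩ ⟨l0, Or.inr h1⟩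
    rw [e x0, e x1, e x2, e x3, spt_cr_add, ← h1, ← h2, ← h3, ← h4] at this
    rw [abs_of_neg (by linarith), abs_of_neg (by linarith), abs_of_neg (by linarith),
      abs_of_neg (by linarith)]
    unfold sptR
    unfold sptCr at this
    rw [mul_comm (x3 - x4), mul_comm (x2 - x4), mul_comm (x2 - x3), mul_comm (x1 - x3) (x0 - x2)] at this
    convert this using 3 <;> ring

lemma spt_R_le {x y z κ : ℝ} (hx : 0 < x) (hy : 0 < y) (hz : 0 < z) (h : κ ≤ sptR x y z) :
    κ * y ≤ z := by
  have : sptR x y z * y ≤ z := by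
    unfold sptR
    rw [div_mul_eq_mul_div, div_le_iff₀ (by positivity)]
    have : 0 < x * z * z := by positivity
    have : 0 < y * z * z := by positivity
    have : 0 < y * y * z := by positivity
    nlinarith
  exact (mul_le_mul_of_nonneg_right h hy.le).trans this

lemma spt_R_ge {x y z : ℝ} (hx : y ≤ x) (hy : 0 < y) (hz : y ≤ z) : 1 / 4 ≤ sptR x y z := by
  have : 0 < x := by linarith
  have : 0 < z := by linarith
  unfold sptR
  rw [div_le_div_iff₀ (by norm_num) (by positivity)]
  nlinarith [mul_le_mul_of_nonneg_left hz this.le, mul_le_mul_of_nonneg_left hx this.le,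
    mul_le_mul_of_nonneg_left hz hy.le, mul_le_mul_of_nonneg_left hz (show 0 ≤ x by linarith)]

/-- the seven-point lemma -/
lemma spt_seven (f : MCM) (ρ : ℝ) (hirr : Irrational ρ) (hmem : ρ ∈ Set.Ioo (0 : ℝ) 1)
    (hrot : HasRotationNumber f.F ρ) :
    ∃ A : ℝ, 1 ≤ A ∧ ∀ (n : ℕ) (z : ℕ → ℝ),
      (∀ j : ℕ, 1 ≤ j → j ≤ 4 → z (j + 1) = f.F^[qDen ρ n] (z j) - (pNum ρ n : ℝ)) →
      (∀ x : ℝ, |f.F^[qDen ρ n] (z 4) - (pNum ρ n : ℝ) - z 4| ≤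
        |f.F^[qDen ρ n] x - (pNum ρ n : ℝ) - x|) →
      ∀ j : ℕ, 1 ≤ j → j ≤ 4 → |z (j + 1) - z j| ≤ A * |z 5 - z 4| := by
  obtain ⟨B, hB, h⟩ := spt_gaps f ρ hirr hmem hrot
  set A := 4 * B ^ 3 with hA
  have hB2 : B ≤ B ^ 2 := by nlinarith
  have hB3 : B ^ 2 ≤ B ^ 3 := by nlinarith [sq_nonneg B]
  have hA1 : 1 ≤ A := by linarith
  refine ⟨A ^ 3, one_le_pow₀ hA1, ?_⟩
  intro n z hz hmin
  obtain ⟨z0, hz0⟩ := spt_surj f (qDen ρ n) (z 1 + pNum ρ n)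
  have hz1 : z 1 = f.F^[qDen ρ n] z0 - pNum ρ n := by rw [hz0]; ring
  have hz2 := hz 1 (by norm_num) (by norm_num)
  have hz3 := hz 2 (by norm_num) (by norm_num)
  have hz4 := hz 3 (by norm_num) (by norm_num)
  have hz5 := hz 4 (by norm_num) (by norm_num)
  norm_num at hz2 hz3 hz4 hz5
  obtain ⟨z6, hz6⟩ : ∃ t, t = f.F^[qDen ρ n] (z 5) - pNum ρ n := ⟨_, rfl⟩
  have hpos : ∀ x, 0 < |f.F^[qDen ρ n] x - pNum ρ n - x| := by
    intro x
    rw [abs_pos, sub_ne_zero]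
    rcases spt_sign f ρ hirr hmem hrot n with hs | hs
    · exact (hs x).ne'
    · exact (hs x).ne
  have p0 := hpos z0
  have p1 := hpos (z 1)
  have p2 := hpos (z 2)
  have p3 := hpos (z 3)
  have p4 := hpos (z 4)
  have p5 := hpos (z 5)
  have m3 := hmin (z 3)
  have m5 := hmin (z 5)
  have g2 := h n _ _ _ _ _ hz3 hz4 hz5 hz6
  have g1 := h n _ _ _ _ _ hz2 hz3 hz4 hz5
  have g0 := h n _ _ _ _ _ hz1 hz2 hz3 hz4
  rw [← hz1] at p0
  rw [← hz2] at p1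
  rw [← hz3] at p2
  rw [← hz4] at p3 m3
  rw [← hz5] at p4 m3 m5
  rw [← hz6] at p5 m5
  have r3 := spt_R_ge m3 p4 m5
  set δ0 := |z 1 - z0|
  set δ1 := |z 2 - z 1|
  set δ2 := |z 3 - z 2|
  set δ3 := |z 4 - z 3|
  set δ4 := |z 5 - z 4|
  have hB0 : 0 < B := by linarith
  have r2 : (4 * B)⁻¹ ≤ sptR δ2 δ3 δ4 := by
    rw [inv_le_iff_one_le_mul₀ (by positivity)]; linarith
  have r1 : (4 * B ^ 2)⁻¹ ≤ sptR δ1 δ2 δ3 := by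
    rw [inv_le_iff_one_le_mul₀ (by positivity)]
    have := mul_le_mul_of_nonneg_left g1 hB0.le
    linarith
  have r0 : (4 * B ^ 3)⁻¹ ≤ sptR δ0 δ1 δ2 := by
    rw [inv_le_iff_one_le_mul₀ (by positivity)]
    have := mul_le_mul_of_nonneg_left g1 hB0.le
    have := mul_le_mul_of_nonneg_left g0 (sq_nonneg B)
    linarith
  have s3 := spt_R_le p2 p3 p4 r2
  have s2 := spt_R_le p1 p2 p3 r1
  have s1 := spt_R_le p0 p1 p2 r0
  rw [inv_mul_le_iff₀ (by positivity)] at s1 s2 s3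
  have u3 : δ3 ≤ A * δ4 := s3.trans (mul_le_mul_of_nonneg_right (by linarith) p4.le)
  have u2 : δ2 ≤ A * δ3 := s2.trans (mul_le_mul_of_nonneg_right (by linarith) p3.le)
  have u1 : δ1 ≤ A * δ2 := s1
  have hA0 : 0 ≤ A := by linarith
  have v2 : δ2 ≤ A ^ 2 * δ4 := by
    have := mul_le_mul_of_nonneg_left u3 hA0
    linarith
  have v1 : δ1 ≤ A ^ 3 * δ4 := by
    have := mul_le_mul_of_nonneg_left v2 hA0
    linarith
  have a2 : A ≤ A ^ 2 := by nlinarith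
  have a3 : A ^ 2 ≤ A ^ 3 := by nlinarith [sq_nonneg A]
  intro j hj1 hj4
  interval_cases j
  · exact v1
  · exact v2.trans (mul_le_mul_of_nonneg_right a3 p4.le)
  · exact u3.trans (mul_le_mul_of_nonneg_right (by linarith) p4.le)
  · exact le_mul_of_one_le_left p4.le (by linarith)


/-- There is `C₂ > 1` depending only on `f` with the following property.
Let `z₁, …, z₅` be the points of the seven-point lemma, i.e. `z_{j+1} = f^{q_n}(z_j)` and
`z₄` has the smallest displacement under `f^{q_n}` among all points of the circle. If
`w₀, …, w₄` satisfy `w_{j+1} = f^{q_n}(w_j)` and `w₁` lies in the interval with endpoints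
`z₁` and `z₂` not containing `z₃`, then `|w₁ - w₂|/|w₀ - w₁| ≤ C₂` and
`C₂⁻¹ ≤ |w_{i-1} - w_i|/|w_i - w_{i+1}| ≤ C₂` for `i = 2, 3`. -/
theorem seven_point_transfer_lemma
    (f : MCM) (ρ : ℝ) (hirr : Irrational ρ) (hmem : ρ ∈ Set.Ioo (0 : ℝ) 1)
    (hrot : HasRotationNumber f.F ρ) :
    ∃ C₂ : ℝ, 1 < C₂ ∧ ∀ (n : ℕ) (z w : ℕ → ℝ),
      (∀ j : ℕ, 1 ≤ j → j ≤ 4 → z (j + 1) = f.F^[qDen ρ n] (z j) - (pNum ρ n : ℝ)) →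
      (∀ x : ℝ, |f.F^[qDen ρ n] (z 4) - (pNum ρ n : ℝ) - z 4| ≤
        |f.F^[qDen ρ n] x - (pNum ρ n : ℝ) - x|) →
      (∀ j : ℕ, j ≤ 3 → w (j + 1) = f.F^[qDen ρ n] (w j) - (pNum ρ n : ℝ)) →
      w 1 ∈ Set.uIcc (z 1) (z 2) →
      (|w 1 - w 2| / |w 0 - w 1| ≤ C₂ ∧
        ∀ i : ℕ, 2 ≤ i → i ≤ 3 →
          C₂⁻¹ ≤ |w (i - 1) - w i| / |w i - w (i + 1)| ∧
            |w (i - 1) - w i| / |w i - w (i + 1)| ≤ C₂) := by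
  obtain ⟨A, hA, h⟩ := spt_seven f ρ hirr hmem hrot
  refine ⟨2 * A, by linarith, ?_⟩
  intro n z w hz hmin hw hw1
  have hδ := h n z hz hmin
  have hz5 := hz 4 (by norm_num) (by norm_num)
  have hmono := spt_iter_mono f (qDen ρ n)
  obtain ⟨m, hm⟩ : ∃ m, m = |z 5 - z 4| := ⟨_, rfl⟩
  have hmpos : 0 < m := by
    rw [hm, hz5, abs_pos, sub_ne_zero]
    rcases spt_sign f ρ hirr hmem hrot n with hs | hs
    · exact (hs _).ne'
    · exact (hs _).ne
  -- lower bounds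
  have low : ∀ j ≤ 3, m ≤ |w j - w (j + 1)| := by
    intro j hj
    rw [hm, hz5, abs_sub_comm (w j), hw j hj]
    exact hmin _
  -- `w j` between `z j` and `z (j+1)`
  have hbet : ∀ j, 1 ≤ j → j ≤ 4 → w j ∈ Set.uIcc (z j) (z (j + 1)) := by
    intro j hj
    induction j, hj using Nat.le_induction with
    | base => intro _; exact hw1
    | succ j hj ih =>
      intro hj4
      have ih := ih (by omega)
      rw [hw j (by omega), hz (j + 1) (by omega) hj4]
      nth_rewrite 1 [hz j hj (by omega)]
      rw [Set.mem_uIcc] at ih ⊢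
      rcases ih with ⟨i1, i2⟩ | ⟨i1, i2⟩
      · left
        exact ⟨sub_le_sub_right (hmono.monotone i1) _, sub_le_sub_right (hmono.monotone i2) _⟩
      · right
        exact ⟨sub_le_sub_right (hmono.monotone i1) _, sub_le_sub_right (hmono.monotone i2) _⟩
  have up : ∀ j, 1 ≤ j → j ≤ 3 → |w j - w (j + 1)| ≤ 2 * A * m := by
    intro j hj hj3
    have b1 := hbet j hj (by omega)
    have b2 := hbet (j + 1) (by omega) (by omega)
    have d1 := hδ j hj (by omega)
    have d2 := hδ (j + 1) (by omega) (by omega)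
    rw [← hm] at d1 d2
    have t1 := Set.abs_sub_right_of_mem_uIcc b1
    have t2 := Set.abs_sub_left_of_mem_uIcc b2
    have t3 := abs_sub_le (w j) (z (j + 1)) (w (j + 1))
    rw [abs_sub_comm (w j) (z (j+1))] at t3
    rw [abs_sub_comm (z (j+1)) (w (j + 1))] at t3
    linarith
  have fin : ∀ i j, i ≤ 3 → 1 ≤ j → j ≤ 3 →
      |w j - w (j + 1)| / |w i - w (i + 1)| ≤ 2 * A := by
    intro i j hi hj hj3
    have l := low i hi
    rw [div_le_iff₀ (by linarith)]
    exact (up j hj hj3).trans (mul_le_mul_of_nonneg_left l (by linarith))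
  refine ⟨fin 0 1 (by norm_num) le_rfl (by norm_num), ?_⟩
  intro i hi2 hi3
  obtain ⟨k, rfl⟩ : ∃ k, i = k + 1 := ⟨i - 1, by omega⟩
  rw [Nat.add_sub_cancel]
  refine ⟨?_, fin (k + 1) k hi3 (by omega) (by omega)⟩
  rw [← inv_div]
  have l1 := low k (by omega)
  have l2 := low (k + 1) hi3
  exact inv_anti₀ (div_pos (by linarith) (by linarith)) (fin k (k + 1) (by omega) (by omega) hi3)
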